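/- arXiv:2106.05535 — 4 statements merged into one kernel-verified Lean document; each statement's English description precedes it below -/
import Mathlib

section
/- Let n, m be natural numbers, A an n×n real matrix, B an n×m real matrix, P, Q n×n symmetric real matrices, and R an m×m symmetric real matrix with R + Bᵀ P B positive definite. Suppose P satisfies P = Aᵀ P A + Q − Aᵀ P B (R + Bᵀ P B)⁻¹ Bᵀ P A, and set K = −(R + Bᵀ P B)⁻¹ Bᵀ P A. Let x : ℕ → ℝⁿ satisfy x_{t+1} = (A + B K) x_t for all t, and set u_t = K x_t. Then for every T ∈ ℕ: ∑_{t=0}^{T−1} ( x_tᵀ Q x_t + u_tᵀ R u_t ) = x_0ᵀ P x_0 − x_Tᵀ P x_T. -/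
open Matrix Finset

/-! Write `F = A + B K`. The gain satisfies `(R + Bᵀ P B) K = -Bᵀ P A`, which turns the Riccati
equation into the Lyapunov equation `Q + Kᵀ R K + Fᵀ P F = P` of the closed loop. Evaluated at
`x_t`, the latter says that the stage cost at time `t` is the decrease of `V(x) = xᵀ P x` from `x_t`
to `x_{t+1}`, and these decreases telescope. -/

section QuadraticForms

variable {ι ι' κ κ' S : Type*} [Fintype ι] [Fintype ι'] [Fintype κ] [Fintype κ']

theorem mulVec_dotProduct_mulVec_mulVec [NonUnitalCommSemiring S] (M : Matrix κ ι S)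
    (N : Matrix κ κ' S) (L : Matrix κ' ι' S) (v : ι → S) (w : ι' → S) :
    M *ᵥ v ⬝ᵥ N *ᵥ (L *ᵥ w) = v ⬝ᵥ (Mᵀ * N * L) *ᵥ w := by
  rw [← vecMul_transpose, ← dotProduct_mulVec, mulVec_mulVec, mulVec_mulVec, Matrix.mul_assoc]

theorem sum_range_dotProduct_mulVec_of_lyapunov [NonUnitalCommRing S] {F P W : Matrix ι ι S}
    (hlyap : W + Fᵀ * P * F = P) {x : ℕ → ι → S} (hx : ∀ t, x (t + 1) = F *ᵥ x t) (T : ℕ) :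
    ∑ t ∈ range T, x t ⬝ᵥ W *ᵥ x t = x 0 ⬝ᵥ P *ᵥ x 0 - x T ⬝ᵥ P *ᵥ x T := by
  have stage_eq_decrease (t : ℕ) :
      x t ⬝ᵥ W *ᵥ x t = x t ⬝ᵥ P *ᵥ x t - x (t + 1) ⬝ᵥ P *ᵥ x (t + 1) := by
    rw [hx, mulVec_dotProduct_mulVec_mulVec, eq_sub_iff_add_eq, ← dotProduct_add, ← add_mulVec,
      hlyap]
  simp only [stage_eq_decrease]
  exact sum_range_sub' (fun t ↦ x t ⬝ᵥ P *ᵥ x t) T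

end QuadraticForms

section ClosedLoop

variable {ι κ S : Type*} [Fintype ι] [Fintype κ]

theorem closedLoop_lyapunov_eq_riccati_add [NonUnitalCommSemiring S] (A : Matrix ι ι S)
    (B : Matrix ι κ S) (P Q : Matrix ι ι S) (R : Matrix κ κ S) (K : Matrix κ ι S) :
    Q + Kᵀ * R * K + (A + B * K)ᵀ * P * (A + B * K) =
      Aᵀ * P * A + Q + Aᵀ * P * B * K + Kᵀ * ((R + Bᵀ * P * B) * K + Bᵀ * P * A) := by
  simp only [transpose_add, transpose_mul, Matrix.add_mul, Matrix.mul_add, Matrix.mul_assoc]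
  abel

theorem closedLoop_lyapunov_of_riccati [NonUnitalCommRing S] {A : Matrix ι ι S}
    {B : Matrix ι κ S} {P Q : Matrix ι ι S} {R : Matrix κ κ S} {K : Matrix κ ι S}
    (hgain : (R + Bᵀ * P * B) * K = -(Bᵀ * P * A))
    (hriccati : P = Aᵀ * P * A + Q + Aᵀ * P * B * K) :
    Q + Kᵀ * R * K + (A + B * K)ᵀ * P * (A + B * K) = P := by
  rw [closedLoop_lyapunov_eq_riccati_add, hgain, neg_add_cancel, Matrix.mul_zero, add_zero,
    ← hriccati]

theorem lqr_telescoping_cost_general [DecidableEq κ] [CommRing S]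
    (A : Matrix ι ι S) (B : Matrix ι κ S) (P Q : Matrix ι ι S) (R : Matrix κ κ S)
    (hunit : IsUnit (R + Bᵀ * P * B))
    (hare : P = Aᵀ * P * A + Q - Aᵀ * P * B * (R + Bᵀ * P * B)⁻¹ * (Bᵀ * P * A))
    (K : Matrix κ ι S) (hK : K = -((R + Bᵀ * P * B)⁻¹ * (Bᵀ * P * A)))
    (x : ℕ → ι → S) (hx : ∀ t, x (t + 1) = (A + B * K) *ᵥ x t)
    (u : ℕ → κ → S) (hu : ∀ t, u t = K *ᵥ x t) (T : ℕ) :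
    ∑ t ∈ range T, (x t ⬝ᵥ Q *ᵥ x t + u t ⬝ᵥ R *ᵥ u t) =
      x 0 ⬝ᵥ P *ᵥ x 0 - x T ⬝ᵥ P *ᵥ x T := by
  have hgain : (R + Bᵀ * P * B) * K = -(Bᵀ * P * A) := by
    rw [hK, Matrix.mul_neg,
      mul_nonsing_inv_cancel_left _ _ ((isUnit_iff_isUnit_det _).mp hunit)]
  have hriccati : P = Aᵀ * P * A + Q + Aᵀ * P * B * K := by
    rwa [hK, Matrix.mul_neg, ← sub_eq_add_neg, ← Matrix.mul_assoc (Aᵀ * P * B)]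
  have stage_cost (t : ℕ) :
      x t ⬝ᵥ Q *ᵥ x t + u t ⬝ᵥ R *ᵥ u t = x t ⬝ᵥ (Q + Kᵀ * R * K) *ᵥ x t := by
    rw [hu, mulVec_dotProduct_mulVec_mulVec, add_mulVec, dotProduct_add]
  simp only [stage_cost]
  exact sum_range_dotProduct_mulVec_of_lyapunov
    (closedLoop_lyapunov_of_riccati hgain hriccati) hx T

end ClosedLoop

/-- Telescoping cost identity for the closed-loop LQR trajectory: with `P`
solving the ARE and `K` the LQR gain, the accumulated cost over `T` steps
equals `x₀ᵀ P x₀ − x_Tᵀ P x_T`. -/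
theorem lqr_telescoping_cost
    (n m : ℕ)
    (A : Matrix (Fin n) (Fin n) ℝ) (B : Matrix (Fin n) (Fin m) ℝ)
    (P Q : Matrix (Fin n) (Fin n) ℝ) (R : Matrix (Fin m) (Fin m) ℝ)
    (hP : P.IsSymm) (hQ : Q.IsSymm) (hR : R.IsSymm)
    (hpd : (R + Bᵀ * P * B).PosDef)
    (hare : P = Aᵀ * P * A + Q -
        Aᵀ * P * B * (R + Bᵀ * P * B)⁻¹ * (Bᵀ * P * A))
    (K : Matrix (Fin m) (Fin n) ℝ)
    (hK : K = -((R + Bᵀ * P * B)⁻¹ * (Bᵀ * P * A)))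
    (x : ℕ → Fin n → ℝ)
    (hx : ∀ t, x (t + 1) = (A + B * K).mulVec (x t))
    (u : ℕ → Fin m → ℝ)
    (hu : ∀ t, u t = K.mulVec (x t)) :
    ∀ T : ℕ,
      ∑ t ∈ Finset.range T,
          (x t ⬝ᵥ Q.mulVec (x t) + u t ⬝ᵥ R.mulVec (u t))
        = x 0 ⬝ᵥ P.mulVec (x 0) - x T ⬝ᵥ P.mulVec (x T) :=
  lqr_telescoping_cost_general A B P Q R hpd.isUnit hare K hK x hx u hu
end

section
/- Let n, m be natural numbers, A an n×n real matrix, B an n×m real matrix, P, Q n×n symmetric real matrices, and R an m×m symmetric real matrix with R + Bᵀ P B positive definite. Suppose P satisfies P = Aᵀ P A + Q − Aᵀ P B (R + Bᵀ P B)⁻¹ Bᵀ P A. Let x : ℕ → ℝⁿ and u : ℕ → ℝᵐ be arbitrary sequences satisfying x_{t+1} = A x_t + B u_t for all t. Then for every T ∈ ℕ: ∑_{t=0}^{T−1} ( x_tᵀ Q x_t + u_tᵀ R u_t ) ≥ x_0ᵀ P x_0 − x_Tᵀ P x_T. -/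
open Matrix Finset

/-! Completing the square in the Riccati equation turns the stage cost into the decrease of the
value function `x ↦ xᴴ P x` plus `(u + K x)ᴴ (R + Bᴴ P B) (u + K x)`, where `K` is the feedback
gain. The decreases telescope along a trajectory, and the squares are nonnegative. -/

section RiccatiGain

variable {𝕜 ι κ : Type*} [Ring 𝕜] [StarRing 𝕜] [Fintype ι] [Fintype κ]
  {A P Q : Matrix ι ι 𝕜} {B : Matrix ι κ 𝕜} {R : Matrix κ κ 𝕜} {K : Matrix κ ι 𝕜}

/-- `K` is a feedback gain that solves, together with `P`, the discrete algebraic Riccati equation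
of the system `x ↦ A x + B u` with stage cost `xᴴ Q x + uᴴ R u`. The normal equation for `K` takes
the place of `K = (R + Bᴴ P B)⁻¹ Bᴴ P A`, so that `R + Bᴴ P B` may be singular. -/
structure IsRiccatiGain (A : Matrix ι ι 𝕜) (B : Matrix ι κ 𝕜) (P Q : Matrix ι ι 𝕜)
    (R : Matrix κ κ 𝕜) (K : Matrix κ ι 𝕜) : Prop where
  normal_eq : (R + Bᴴ * P * B) * K = Bᴴ * P * A
  riccati_eq : P = Aᴴ * P * A + Q - Aᴴ * P * B * K

namespace IsRiccatiGain

theorem conjTranspose_normal_eq (hK : IsRiccatiGain A B P Q R K) (hP : P.IsHermitian)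
    (hS : (R + Bᴴ * P * B).IsHermitian) : Kᴴ * (R + Bᴴ * P * B) = Aᴴ * P * B :=
  calc
    Kᴴ * (R + Bᴴ * P * B) = ((R + Bᴴ * P * B) * K)ᴴ := by rw [conjTranspose_mul, hS.eq]
    _ = (Bᴴ * P * A)ᴴ := by rw [hK.normal_eq]
    _ = Aᴴ * P * B := by
      simp only [conjTranspose_mul, conjTranspose_conjTranspose, hP.eq, Matrix.mul_assoc]

theorem stage_cost_eq (hK : IsRiccatiGain A B P Q R K) (hP : P.IsHermitian)
    (hS : (R + Bᴴ * P * B).IsHermitian) (x : ι → 𝕜) (u : κ → 𝕜) :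
    star x ⬝ᵥ Q *ᵥ x + star u ⬝ᵥ R *ᵥ u =
      star x ⬝ᵥ P *ᵥ x - star (A *ᵥ x + B *ᵥ u) ⬝ᵥ P *ᵥ (A *ᵥ x + B *ᵥ u) +
        star (u + K *ᵥ x) ⬝ᵥ (R + Bᴴ * P * B) *ᵥ (u + K *ᵥ x) := by
  have value_eq : star x ⬝ᵥ P *ᵥ x = star x ⬝ᵥ (Aᴴ * P * A) *ᵥ x + star x ⬝ᵥ Q *ᵥ x -
      star x ⬝ᵥ (Aᴴ * P * B * K) *ᵥ x := by
    rw [← dotProduct_add, ← dotProduct_sub, ← add_mulVec, ← sub_mulVec, ← hK.riccati_eq]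
  have next_value_eq : star (A *ᵥ x + B *ᵥ u) ⬝ᵥ P *ᵥ (A *ᵥ x + B *ᵥ u) =
      star x ⬝ᵥ (Aᴴ * P * A) *ᵥ x + star x ⬝ᵥ (Aᴴ * P * B) *ᵥ u +
        star u ⬝ᵥ (Bᴴ * P * A) *ᵥ x + star u ⬝ᵥ (Bᴴ * P * B) *ᵥ u := by
    simp only [star_add, star_mulVec, mulVec_add, add_dotProduct, dotProduct_add,
      ← dotProduct_mulVec, mulVec_mulVec, Matrix.mul_assoc]
    abel
  have square_eq : star (u + K *ᵥ x) ⬝ᵥ (R + Bᴴ * P * B) *ᵥ (u + K *ᵥ x) =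
      star u ⬝ᵥ R *ᵥ u + star u ⬝ᵥ (Bᴴ * P * B) *ᵥ u + star u ⬝ᵥ (Bᴴ * P * A) *ᵥ x +
        star x ⬝ᵥ (Aᴴ * P * B) *ᵥ u + star x ⬝ᵥ (Aᴴ * P * B * K) *ᵥ x := by
    rw [← hK.conjTranspose_normal_eq hP hS, ← hK.normal_eq]
    simp only [star_add, star_mulVec, mulVec_add, add_mulVec, add_dotProduct, dotProduct_add,
      ← dotProduct_mulVec, mulVec_mulVec, Matrix.mul_assoc, Matrix.add_mul, Matrix.mul_add]
    abel
  rw [value_eq, next_value_eq, square_eq]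
  abel

theorem sum_stage_cost_eq (hK : IsRiccatiGain A B P Q R K) (hP : P.IsHermitian)
    (hS : (R + Bᴴ * P * B).IsHermitian) {x : ℕ → ι → 𝕜} {u : ℕ → κ → 𝕜}
    (hx : ∀ t, x (t + 1) = A *ᵥ x t + B *ᵥ u t) (T : ℕ) :
    ∑ t ∈ range T, (star (x t) ⬝ᵥ Q *ᵥ x t + star (u t) ⬝ᵥ R *ᵥ u t) =
      star (x 0) ⬝ᵥ P *ᵥ x 0 - star (x T) ⬝ᵥ P *ᵥ x T +
        ∑ t ∈ range T,
          star (u t + K *ᵥ x t) ⬝ᵥ (R + Bᴴ * P * B) *ᵥ (u t + K *ᵥ x t) := by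
  simp only [hK.stage_cost_eq hP hS, ← hx, sum_add_distrib]
  rw [sum_range_sub' fun t ↦ star (x t) ⬝ᵥ P *ᵥ x t]

end IsRiccatiGain

theorem lqr_cost_lower_bound_general [PartialOrder 𝕜] [IsOrderedAddMonoid 𝕜]
    (hP : P.IsHermitian) (hS : (R + Bᴴ * P * B).PosSemidef) (hK : IsRiccatiGain A B P Q R K)
    {x : ℕ → ι → 𝕜} {u : ℕ → κ → 𝕜} (hx : ∀ t, x (t + 1) = A *ᵥ x t + B *ᵥ u t) (T : ℕ) :
    star (x 0) ⬝ᵥ P *ᵥ x 0 - star (x T) ⬝ᵥ P *ᵥ x T ≤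
      ∑ t ∈ range T, (star (x t) ⬝ᵥ Q *ᵥ x t + star (u t) ⬝ᵥ R *ᵥ u t) := by
  rw [hK.sum_stage_cost_eq hP hS.isHermitian hx]
  exact le_add_of_nonneg_right (sum_nonneg fun t _ ↦ hS.dotProduct_mulVec_nonneg _)

end RiccatiGain

theorem IsRiccatiGain.of_isUnit {𝕜 ι κ : Type*} [CommRing 𝕜] [StarRing 𝕜] [Fintype ι] [Fintype κ]
    [DecidableEq κ] {A P Q : Matrix ι ι 𝕜} {B : Matrix ι κ 𝕜} {R : Matrix κ κ 𝕜}
    (hS : IsUnit (R + Bᴴ * P * B))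
    (hare : P = Aᴴ * P * A + Q - Aᴴ * P * B * (R + Bᴴ * P * B)⁻¹ * (Bᴴ * P * A)) :
    IsRiccatiGain A B P Q R ((R + Bᴴ * P * B)⁻¹ * (Bᴴ * P * A)) where
  normal_eq := mul_nonsing_inv_cancel_left _ _ ((isUnit_iff_isUnit_det _).1 hS)
  riccati_eq := hare.trans (by rw [Matrix.mul_assoc _ _⁻¹])

/-- Lower bound on the accumulated quadratic cost of any admissible control
sequence, establishing the optimality of the LQR state-feedback controller. -/
theorem lqr_cost_lower_bound
    (n m : ℕ)
    (A : Matrix (Fin n) (Fin n) ℝ) (B : Matrix (Fin n) (Fin m) ℝ)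
    (P Q : Matrix (Fin n) (Fin n) ℝ) (R : Matrix (Fin m) (Fin m) ℝ)
    (hP : P.IsSymm) (hQ : Q.IsSymm) (hR : R.IsSymm)
    (hpd : (R + Bᵀ * P * B).PosDef)
    (hare : P = Aᵀ * P * A + Q -
        Aᵀ * P * B * (R + Bᵀ * P * B)⁻¹ * (Bᵀ * P * A))
    (x : ℕ → Fin n → ℝ) (u : ℕ → Fin m → ℝ)
    (hx : ∀ t, x (t + 1) = A.mulVec (x t) + B.mulVec (u t)) :
    ∀ T : ℕ,
      ∑ t ∈ Finset.range T,
          (x t ⬝ᵥ Q.mulVec (x t) + u t ⬝ᵥ R.mulVec (u t))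
        ≥ x 0 ⬝ᵥ P.mulVec (x 0) - x T ⬝ᵥ P.mulVec (x T) := by
  simp only [← conjTranspose_eq_transpose_of_trivial] at hpd hare
  simpa only [star_trivial] using lqr_cost_lower_bound_general
    (isHermitian_iff_isSymm.2 hP) hpd.posSemidef (IsRiccatiGain.of_isUnit hpd.isUnit hare) hx
end

section
/- Let n, m be natural numbers, A an n×n real matrix, B an n×m real matrix, P, Q n×n symmetric real matrices with Q positive semidefinite, and R an m×m symmetric positive semidefinite real matrix with R + Bᵀ P B positive definite. Suppose P satisfies P = Aᵀ P A + Q − Aᵀ P B (R + Bᵀ P B)⁻¹ Bᵀ P A, set K = −(R + Bᵀ P B)⁻¹ Bᵀ P A, and let x_0 ∈ ℝⁿ. If (A + B K)^t x_0 → 0 as t → ∞, then the series ∑_{t=0}^{∞} ( x_tᵀ Q x_t + (K x_t)ᵀ R (K x_t) ) with x_t = (A + B K)^t x_0 converges and its sum equals x_0ᵀ P x_0. -/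
open Matrix Filter

/-!
The Riccati equation says that `P` solves the Lyapunov equation
`P = W + (A + BK)ᵀ P (A + BK)` of the closed loop, where `W = Q + Kᵀ R K` is the stage cost. Along
the trajectory `x_t`, the stage cost at time `t` is therefore the decrease of `xᵀ P x` from `x_t` to
`x_{t+1}`; the series telescopes, and `x_tᵀ P x_t` tends to zero with `x_t`.
-/

section QuadraticForm

variable {ι κ α : Type*} [Fintype ι] [Fintype κ]

lemma dotProduct_transpose_mul_mul_mulVec [NonUnitalCommSemiring α]
    (M : Matrix κ ι α) (N : Matrix κ κ α) (x : ι → α) :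
    x ⬝ᵥ (Mᵀ * N * M) *ᵥ x = (M *ᵥ x) ⬝ᵥ N *ᵥ (M *ᵥ x) := by
  rw [Matrix.mul_assoc, ← mulVec_mulVec, ← mulVec_mulVec, dotProduct_mulVec, vecMul_transpose]

lemma riccati_closedLoop_lyapunov [NonUnitalCommRing α] {A P Q : Matrix ι ι α} {B : Matrix ι κ α}
    {R : Matrix κ κ α} {K : Matrix κ ι α} (hK : (R + Bᵀ * P * B) * K = -(Bᵀ * P * A))
    (hP : P = Aᵀ * P * A + Q + Aᵀ * P * B * K) :
    P = Q + Kᵀ * R * K + (A + B * K)ᵀ * P * (A + B * K) := by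
  have gain_terms_cancel : Kᵀ * ((R + Bᵀ * P * B) * K) + Kᵀ * (Bᵀ * P * A) = 0 := by
    rw [hK, Matrix.mul_neg, neg_add_cancel]
  calc
    P = Aᵀ * P * A + Q + Aᵀ * P * B * K := hP
    _ = Aᵀ * P * A + Q + Aᵀ * P * B * K +
          (Kᵀ * ((R + Bᵀ * P * B) * K) + Kᵀ * (Bᵀ * P * A)) := by
      rw [gain_terms_cancel, add_zero]
    _ = Q + Kᵀ * R * K + (A + B * K)ᵀ * P * (A + B * K) := by
      simp only [transpose_add, transpose_mul, Matrix.add_mul, Matrix.mul_add, Matrix.mul_assoc]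
      abel

end QuadraticForm

lemma hasSum_sub_succ_of_antitone {u : ℕ → ℝ} {l : ℝ} (hu : Antitone u)
    (hl : Tendsto u atTop (nhds l)) : HasSum (fun t => u t - u (t + 1)) (u 0 - l) := by
  rw [hasSum_iff_tendsto_nat_of_nonneg fun t => sub_nonneg.2 (hu t.le_succ)]
  simpa only [Finset.sum_range_sub'] using hl.const_sub (u 0)

section RealMatrices

variable {ι κ : Type*} [Fintype ι] [DecidableEq ι] [Fintype κ] [DecidableEq κ]

lemma hasSum_lyapunov {M P W : Matrix ι ι ℝ} (hP : P = W + Mᵀ * P * M)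
    (hW : ∀ x, 0 ≤ x ⬝ᵥ W *ᵥ x) {x₀ : ι → ℝ}
    (hstab : Tendsto (fun t : ℕ => M ^ t *ᵥ x₀) atTop (nhds 0)) :
    HasSum (fun t : ℕ => (M ^ t *ᵥ x₀) ⬝ᵥ W *ᵥ (M ^ t *ᵥ x₀)) (x₀ ⬝ᵥ P *ᵥ x₀) := by
  let u : ℕ → ℝ := fun t => (M ^ t *ᵥ x₀) ⬝ᵥ P *ᵥ (M ^ t *ᵥ x₀)
  have cost_eq_decrease (t : ℕ) : (M ^ t *ᵥ x₀) ⬝ᵥ W *ᵥ (M ^ t *ᵥ x₀) = u t - u (t + 1) := by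
    rw [eq_sub_of_add_eq hP.symm, sub_mulVec, dotProduct_sub, dotProduct_transpose_mul_mul_mulVec,
      mulVec_mulVec x₀ M, ← pow_succ']
  have u_antitone : Antitone u := antitone_nat_of_succ_le fun t =>
    sub_nonneg.1 (cost_eq_decrease t ▸ hW _)
  have u_tendsto_zero : Tendsto u atTop (nhds 0) := by
    have form_continuous : Continuous fun x : ι → ℝ => x ⬝ᵥ P *ᵥ x := by fun_prop
    exact (form_continuous.tendsto' 0 0 (zero_dotProduct _)).comp hstab
  simpa only [cost_eq_decrease, u, pow_zero, one_mulVec, sub_zero] using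
    hasSum_sub_succ_of_antitone u_antitone u_tendsto_zero

theorem lqr_infinite_horizon_cost_general
    {A P Q : Matrix ι ι ℝ} {B : Matrix ι κ ℝ} {R : Matrix κ κ ℝ}
    (hQ : ∀ x, 0 ≤ x ⬝ᵥ Q *ᵥ x) (hR : ∀ v, 0 ≤ v ⬝ᵥ R *ᵥ v)
    (hunit : IsUnit (R + Bᵀ * P * B))
    (hare : P = Aᵀ * P * A + Q -
        Aᵀ * P * B * (R + Bᵀ * P * B)⁻¹ * (Bᵀ * P * A))
    {K : Matrix κ ι ℝ} (hK : K = -((R + Bᵀ * P * B)⁻¹ * (Bᵀ * P * A)))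
    {x₀ : ι → ℝ} (hstab : Tendsto (fun t : ℕ => (A + B * K) ^ t *ᵥ x₀) atTop (nhds 0)) :
    HasSum
      (fun t : ℕ =>
        ((A + B * K) ^ t *ᵥ x₀) ⬝ᵥ Q *ᵥ ((A + B * K) ^ t *ᵥ x₀) +
          (K *ᵥ ((A + B * K) ^ t *ᵥ x₀)) ⬝ᵥ R *ᵥ (K *ᵥ ((A + B * K) ^ t *ᵥ x₀)))
      (x₀ ⬝ᵥ P *ᵥ x₀) := by
  have normal_equation : (R + Bᵀ * P * B) * K = -(Bᵀ * P * A) := by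
    rw [hK, Matrix.mul_neg, mul_nonsing_inv_cancel_left _ _ ((isUnit_iff_isUnit_det _).1 hunit)]
  have riccati : P = Aᵀ * P * A + Q + Aᵀ * P * B * K := by
    rwa [hK, Matrix.mul_neg, ← sub_eq_add_neg, ← Matrix.mul_assoc (Aᵀ * P * B)]
  have stage_cost (x : ι → ℝ) :
      x ⬝ᵥ (Q + Kᵀ * R * K) *ᵥ x = x ⬝ᵥ Q *ᵥ x + (K *ᵥ x) ⬝ᵥ R *ᵥ (K *ᵥ x) := by
    rw [add_mulVec, dotProduct_add, dotProduct_transpose_mul_mul_mulVec]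
  have stage_cost_nonneg (x : ι → ℝ) : 0 ≤ x ⬝ᵥ (Q + Kᵀ * R * K) *ᵥ x :=
    stage_cost x ▸ add_nonneg (hQ x) (hR (K *ᵥ x))
  simpa only [stage_cost] using
    hasSum_lyapunov (riccati_closedLoop_lyapunov normal_equation riccati) stage_cost_nonneg hstab

end RealMatrices

/-- If the closed-loop state `(A + BK)^t x₀` converges to zero, the
infinite-horizon LQR cost series converges and sums to `x₀ᵀ P x₀`. -/
theorem lqr_infinite_horizon_cost
    (n m : ℕ)
    (A : Matrix (Fin n) (Fin n) ℝ) (B : Matrix (Fin n) (Fin m) ℝ)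
    (P Q : Matrix (Fin n) (Fin n) ℝ) (R : Matrix (Fin m) (Fin m) ℝ)
    (hP : P.IsSymm) (hQ : Q.PosSemidef) (hR : R.PosSemidef)
    (hpd : (R + Bᵀ * P * B).PosDef)
    (hare : P = Aᵀ * P * A + Q -
        Aᵀ * P * B * (R + Bᵀ * P * B)⁻¹ * (Bᵀ * P * A))
    (K : Matrix (Fin m) (Fin n) ℝ)
    (hK : K = -((R + Bᵀ * P * B)⁻¹ * (Bᵀ * P * A)))
    (x₀ : Fin n → ℝ)
    (hstab : Tendsto (fun t : ℕ => ((A + B * K) ^ t).mulVec x₀) atTop (nhds 0)) :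
    HasSum
      (fun t : ℕ =>
        ((A + B * K) ^ t).mulVec x₀ ⬝ᵥ Q.mulVec (((A + B * K) ^ t).mulVec x₀) +
          K.mulVec (((A + B * K) ^ t).mulVec x₀) ⬝ᵥ
            R.mulVec (K.mulVec (((A + B * K) ^ t).mulVec x₀)))
      (x₀ ⬝ᵥ P.mulVec x₀) :=
  lqr_infinite_horizon_cost_general hQ.dotProduct_mulVec_nonneg hR.dotProduct_mulVec_nonneg
    hpd.isUnit hare hK hstab
end

section
/- Let n be a natural number, M an n×n real matrix, and P an n×n symmetric positive definite real matrix such that P − Mᵀ P M is positive definite. Then M^k → 0 as k → ∞ (the sequence of matrix powers converges to the zero matrix); in particular M^k x → 0 for every x ∈ ℝⁿ. -/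
open Matrix Filter

/-!
The Lyapunov decrement `Q = P - Mᴴ P M` telescopes along the powers of `M`:
`∑ k < N, (M ^ k)ᴴ Q M ^ k = P - (M ^ N)ᴴ P M ^ N ≤ P`. Hence the nonnegative numbers
`tr ((M ^ k)ᴴ Q M ^ k)` are summable, and so tend to `0`. Writing `Q = Bᴴ B` with `B` invertible,
these numbers are the squared Frobenius norms of `B M ^ k`, so `B M ^ k → 0` and therefore
`M ^ k → 0`.
-/

open scoped MatrixOrder ComplexOrder Topology

section StarRing

variable {R : Type*} [Ring R]

theorem sum_range_star_pow_mul_sub_mul_pow [StarMul R] (p m : R) (N : ℕ) :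
    ∑ k ∈ Finset.range N, star (m ^ k) * (p - star m * p * m) * m ^ k =
      p - star (m ^ N) * p * m ^ N := by
  have decrement (k : ℕ) : star (m ^ k) * (p - star m * p * m) * m ^ k =
      star (m ^ k) * p * m ^ k - star (m ^ (k + 1)) * p * m ^ (k + 1) := by
    rw [pow_succ' m k, star_mul]
    noncomm_ring
  simp only [decrement, Finset.sum_range_sub', pow_zero, star_one, one_mul, mul_one]

theorem sum_range_star_pow_mul_sub_mul_pow_le [StarRing R] [PartialOrder R] [StarOrderedRing R]
    {p : R} (hp : 0 ≤ p) (m : R) (N : ℕ) :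
    ∑ k ∈ Finset.range N, star (m ^ k) * (p - star m * p * m) * m ^ k ≤ p := by
  rw [sum_range_star_pow_mul_sub_mul_pow]
  exact sub_le_self p (star_left_conjugate_nonneg hp _)

end StarRing

section Matrix

variable {𝕜 m n : Type*} [RCLike 𝕜] [Fintype m] [Fintype n]

theorem monotone_re_trace : Monotone fun A : Matrix n n 𝕜 => RCLike.re A.trace := by
  intro A B hAB
  have h : 0 ≤ (B - A).trace := (le_iff.1 hAB).trace_nonneg
  rw [trace_sub, sub_nonneg] at h
  exact (RCLike.le_iff_re_im.1 h).1

theorem re_trace_conjTranspose_mul_self (A : Matrix m n 𝕜) :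
    RCLike.re (Aᴴ * A).trace = ∑ j, ∑ i, ‖A i j‖ ^ 2 := by
  simp only [trace, diag_apply, mul_apply, conjTranspose_apply, RCLike.star_def, RCLike.conj_mul,
    ← RCLike.ofReal_pow, map_sum, RCLike.ofReal_re]

theorem sq_norm_apply_le_re_trace_conjTranspose_mul_self (A : Matrix m n 𝕜) (i : m) (j : n) :
    ‖A i j‖ ^ 2 ≤ RCLike.re (Aᴴ * A).trace := by
  rw [re_trace_conjTranspose_mul_self]
  calc ‖A i j‖ ^ 2 ≤ ∑ i, ‖A i j‖ ^ 2 :=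
        Finset.single_le_sum (f := fun i => ‖A i j‖ ^ 2) (fun _ _ => by positivity)
          (Finset.mem_univ i)
    _ ≤ ∑ j, ∑ i, ‖A i j‖ ^ 2 :=
        Finset.single_le_sum (f := fun j => ∑ i, ‖A i j‖ ^ 2) (fun _ _ => by positivity)
          (Finset.mem_univ j)

theorem tendsto_zero_of_re_trace_conjTranspose_mul_self {α : Type*} {l : Filter α}
    {A : α → Matrix m n 𝕜} (hA : Tendsto (fun a => RCLike.re ((A a)ᴴ * A a).trace) l (𝓝 0)) :
    Tendsto A l (𝓝 0) := by
  refine tendsto_pi_nhds.2 fun i => tendsto_pi_nhds.2 fun j => ?_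
  have hsq : Tendsto (fun a => ‖A a i j‖ ^ 2) l (𝓝 0) :=
    squeeze_zero (fun _ => by positivity)
      (fun a => sq_norm_apply_le_re_trace_conjTranspose_mul_self (A a) i j) hA
  refine tendsto_zero_iff_norm_tendsto_zero.2 ?_
  simpa only [Real.sqrt_sq (norm_nonneg _), Real.sqrt_zero] using hsq.sqrt

theorem tendsto_zero_of_re_trace_conjTranspose_mul_mul_self {α : Type*} {l : Filter α}
    {Q : Matrix n n 𝕜} (hQ : Q.PosDef) {A : α → Matrix n m 𝕜}
    (hA : Tendsto (fun a => RCLike.re ((A a)ᴴ * Q * A a).trace) l (𝓝 0)) :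
    Tendsto A l (𝓝 0) := by
  classical
  obtain ⟨B, hB, rfl⟩ :=
    CStarAlgebra.isStrictlyPositive_iff_eq_star_mul_self.1 hQ.isStrictlyPositive
  have hBA : Tendsto (fun a => B * A a) l (𝓝 0) := by
    refine tendsto_zero_of_re_trace_conjTranspose_mul_self ?_
    simpa only [conjTranspose_mul, star_eq_conjTranspose, Matrix.mul_assoc] using hA
  have hcont : Continuous fun C : Matrix n m 𝕜 => B⁻¹ * C := by fun_prop
  simpa only [Function.comp_def, Matrix.mul_zero,
    nonsing_inv_mul_cancel_left _ _ ((isUnit_iff_isUnit_det B).1 hB)] using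
    (hcont.tendsto 0).comp hBA

variable [DecidableEq n]

theorem summable_re_trace_conjTranspose_pow_mul_sub_mul_pow {M P : Matrix n n 𝕜} (hP : P.PosSemidef)
    (hdec : (P - Mᴴ * P * M).PosSemidef) :
    Summable fun k : ℕ => RCLike.re ((M ^ k)ᴴ * (P - Mᴴ * P * M) * M ^ k).trace := by
  refine summable_of_sum_range_le (c := RCLike.re P.trace) (fun k => ?_) fun N => ?_
  · simpa only [trace_zero, map_zero] using
      monotone_re_trace (hdec.conjTranspose_mul_mul_same (M ^ k)).nonneg
  · simpa only [trace_sum, map_sum, star_eq_conjTranspose] using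
      monotone_re_trace (sum_range_star_pow_mul_sub_mul_pow_le hP.nonneg M N)

theorem lyapunov_stability_general {M P : Matrix n n 𝕜} (hP : P.PosSemidef)
    (hdec : (P - Mᴴ * P * M).PosDef) :
    Tendsto (fun k : ℕ => M ^ k) atTop (𝓝 0) ∧
      ∀ x : n → 𝕜, Tendsto (fun k : ℕ => M ^ k *ᵥ x) atTop (𝓝 0) := by
  have hpow : Tendsto (fun k : ℕ => M ^ k) atTop (𝓝 0) :=
    tendsto_zero_of_re_trace_conjTranspose_mul_mul_self hdec
      (summable_re_trace_conjTranspose_pow_mul_sub_mul_pow hP hdec.posSemidef).tendsto_atTop_zero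
  refine ⟨hpow, fun x => ?_⟩
  have hcont : Continuous fun A : Matrix n n 𝕜 => A *ᵥ x := by fun_prop
  simpa only [Function.comp_def, zero_mulVec] using (hcont.tendsto 0).comp hpow

end Matrix

/-- Discrete-time Lyapunov stability criterion: if `P ≻ 0` and
`P − Mᵀ P M ≻ 0`, then `M^k → 0`; in particular `M^k x → 0` for every `x`. -/
theorem lyapunov_stability
    (n : ℕ) (M P : Matrix (Fin n) (Fin n) ℝ)
    (hP : P.PosDef) (hdec : (P - Mᵀ * P * M).PosDef) :
    Tendsto (fun k : ℕ => M ^ k) atTop (nhds 0) ∧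
      ∀ x : Fin n → ℝ,
        Tendsto (fun k : ℕ => (M ^ k).mulVec x) atTop (nhds 0) :=
  lyapunov_stability_general hP.posSemidef (by rwa [conjTranspose_eq_transpose_of_trivial])
end
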